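/- Let A, A' be nondeterministic parity tree automata over T^d with alphabet 2^σ, and let m = |A| · |A'| + 1. Then A and A' are joint ≅^n_σ-consistent over T^d for every n ∈ ℕ if and only if A and A' are joint ≅^m_σ-consistent over T^d. -/

import Mathlib

/-- Formulae of the modal μ-calculus (in negation normal form). -/
inductive Form : Type
  | pos : ℕ → Form
  | neg : ℕ → Form
  | or  : Form → Form → Form
  | and : Form → Form → Form
  | dia : Form → Form
  | box : Form → Form
  | var : ℕ → Form
  | mu  : ℕ → Form → Form
  | nu  : ℕ → Form → Form

namespace Form

/-- Fixpoint-free formulae: modal logic ML. -/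
def IsML : Form → Prop
  | pos _ => True
  | neg _ => True
  | or φ ψ => IsML φ ∧ IsML ψ
  | and φ ψ => IsML φ ∧ IsML ψ
  | dia φ => IsML φ
  | box φ => IsML φ
  | var _ => False
  | mu _ _ => False
  | nu _ _ => False

/-- Modal depth: maximal nesting of ◇ and □. -/
def depth : Form → ℕ
  | pos _ => 0
  | neg _ => 0
  | or φ ψ => max φ.depth ψ.depth
  | and φ ψ => max φ.depth ψ.depth
  | dia φ => φ.depth + 1
  | box φ => φ.depth + 1
  | var _ => 0
  | mu _ φ => φ.depth
  | nu _ φ => φ.depth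

/-- The set of propositions occurring in a formula. -/
def sig : Form → Set ℕ
  | pos p => {p}
  | neg p => {p}
  | or φ ψ => φ.sig ∪ ψ.sig
  | and φ ψ => φ.sig ∪ ψ.sig
  | dia φ => φ.sig
  | box φ => φ.sig
  | var _ => ∅
  | mu _ φ => φ.sig
  | nu _ φ => φ.sig

/-- The size of a formula (its length as a string, up to a constant factor). -/
def size : Form → ℕ
  | pos _ => 1
  | neg _ => 2
  | or φ ψ => φ.size + ψ.size + 1
  | and φ ψ => φ.size + ψ.size + 1
  | dia φ => φ.size + 1
  | box φ => φ.size + 1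
  | var _ => 1
  | mu _ φ => φ.size + 2
  | nu _ φ => φ.size + 2

end Form

/-- A set has at least `g` elements. -/
def AtLeastCard {W : Type} (g : ℕ) (S : Set W) : Prop :=
  ∃ f : Fin g → W, Function.Injective f ∧ ∀ i, f i ∈ S

/-- Pointed Kripke structures. -/
structure Model : Type 1 where
  W : Type
  root : W
  R : W → W → Prop
  val : W → ℕ → Prop

namespace Model

/-- Semantics of the μ-calculus, via Knaster–Tarski style clauses. -/
def interp (M : Model) : Form → (ℕ → Set M.W) → Set M.W
  | .pos p, _ => {w | M.val w p}
  | .neg p, _ => {w | ¬ M.val w p}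
  | .or φ ψ, e => M.interp φ e ∪ M.interp ψ e
  | .and φ ψ, e => M.interp φ e ∩ M.interp ψ e
  | .dia φ, e => {w | ∃ v, M.R w v ∧ v ∈ M.interp φ e}
  | .box φ, e => {w | ∀ v, M.R w v → v ∈ M.interp φ e}
  | .var x, e => e x
  | .mu x φ, e => sInf {S : Set M.W | M.interp φ (Function.update e x S) ⊆ S}
  | .nu x φ, e => sSup {S : Set M.W | S ⊆ M.interp φ (Function.update e x S)}

/-- `M ⊨ φ`: the root of `M` satisfies `φ`. -/
def Sat (M : Model) (φ : Form) : Prop := M.root ∈ M.interp φ fun _ => ∅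

/-- Points reachable from the root in exactly `k` steps (in a tree: points of depth `k`). -/
def stepsTo (M : Model) : ℕ → M.W → Prop
  | 0, w => w = M.root
  | (k+1), w => ∃ v, M.stepsTo k v ∧ M.R v w

/-- Membership in the `n`-prefix: depth at most `n`. -/
def InPrefix (M : Model) (n : ℕ) (w : M.W) : Prop := ∃ k ≤ n, M.stepsTo k w

/-- Tree models: every point is reachable from the root, the root has no predecessor,
and every point has at most one predecessor. -/
def IsTree (M : Model) : Prop :=
  (∀ w, Relation.ReflTransGen M.R M.root w) ∧
  (∀ w, ¬ M.R w M.root) ∧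
  (∀ w v v', M.R v w → M.R v' w → v = v')

/-- Outdegree at most `d`. -/
def outdegLE (M : Model) (d : ℕ) : Prop :=
  ∀ w, ¬ AtLeastCard (d+1) {v | M.R w v}

end Model

/-- The class `T^d` of all tree models of outdegree at most `d`. -/
def TreeC (d : ℕ) : Set Model := {M | M.IsTree ∧ M.outdegLE d}

/-- `(σ,n)`-bisimulations: bisimulations between the `n`-prefixes of the `σ`-reducts,
relating only points of equal depth and linking the roots. -/
structure IsNBisim (M M' : Model) (σ : Set ℕ) (n : ℕ) (Z : M.W → M'.W → Prop) : Prop where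
  root : Z M.root M'.root
  depthEq : ∀ ⦃w w'⦄, Z w w' → ∃ k ≤ n, M.stepsTo k w ∧ M'.stepsTo k w'
  base : ∀ ⦃w w'⦄, Z w w' → ∀ p ∈ σ, (M.val w p ↔ M'.val w' p)
  forth : ∀ ⦃w w'⦄, Z w w' → ∀ k, k < n → M.stepsTo k w →
      ∀ v, M.R w v → ∃ v', M'.R w' v' ∧ Z v v'
  back : ∀ ⦃w w'⦄, Z w w' → ∀ k, k < n → M'.stepsTo k w' →
      ∀ v', M'.R w' v' → ∃ v, M.R w v ∧ Z v v'

/-- `(σ,n)`-isomorphisms: `(σ,n)`-bisimulations bijective on the `n`-prefixes. -/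
def IsNIso (M M' : Model) (σ : Set ℕ) (n : ℕ) (Z : M.W → M'.W → Prop) : Prop :=
  IsNBisim M M' σ n Z ∧
  (∀ w w₁' w₂', Z w w₁' → Z w w₂' → w₁' = w₂') ∧
  (∀ w₁ w₂ w', Z w₁ w' → Z w₂ w' → w₁ = w₂) ∧
  (∀ w, M.InPrefix n w → ∃ w', Z w w') ∧
  (∀ w', M'.InPrefix n w' → ∃ w, Z w w')

/-- `M ≈ⁿ_σ M'`. -/
def NBisimEq (M M' : Model) (σ : Set ℕ) (n : ℕ) : Prop := ∃ Z, IsNBisim M M' σ n Z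

/-- `M ≅ⁿ_σ M'`. -/
def NIsoEq (M M' : Model) (σ : Set ℕ) (n : ℕ) : Prop := ∃ Z, IsNIso M M' σ n Z

/-- `ψ` separates `φ` from `φ'` over the class `C`: `φ ⊨ ψ` and `ψ ⊨ ¬φ'` over `C`. -/
def Separates (C : Set Model) (ψ φ φ' : Form) : Prop :=
  (∀ M ∈ C, M.Sat φ → M.Sat ψ) ∧ (∀ M ∈ C, M.Sat ψ → ¬ M.Sat φ')

/-- Nondeterministic parity tree automata (NPTA) with alphabet `2^σ`. -/
structure NPTA (σ : Set ℕ) : Type 1 where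
  Q : Type
  fin : Fintype Q
  qI : Q
  δ : Q → Set ℕ → Set (List Q)
  rank : Q → ℕ

/-- The number of states of an automaton. -/
def NPTA.card {σ : Set ℕ} (A : NPTA σ) : ℕ := @Fintype.card A.Q A.fin

/-- A run of `A` on `M`: the root gets the initial state, and at every point the
tuple of states of the children is a legal transition for the point's `σ`-letter. -/
def IsRun {σ : Set ℕ} (A : NPTA σ) (M : Model) (ρ : M.W → A.Q) : Prop :=
  ρ M.root = A.qI ∧
  ∀ w : M.W, ∃ l : List M.W, l.Nodup ∧ (∀ v, v ∈ l ↔ M.R w v) ∧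
    l.map ρ ∈ A.δ (ρ w) (σ ∩ {p | M.val w p})

/-- The parity condition: the largest priority occurring infinitely often is even. -/
def ParityGood (r : ℕ → ℕ) : Prop :=
  ∃ m, Even m ∧ (∀ N, ∃ i, N ≤ i ∧ r i = m) ∧ (∀ k, m < k → ∃ N, ∀ i, N ≤ i → r i ≠ k)

/-- Accepting runs: every infinite path satisfies the parity condition. -/
def IsAccRun {σ : Set ℕ} (A : NPTA σ) (M : Model) (ρ : M.W → A.Q) : Prop :=
  IsRun A M ρ ∧
  ∀ π : ℕ → M.W, (∀ i, M.R (π i) (π (i+1))) → ParityGood fun i => A.rank (ρ (π i))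

/-- `M ⊨ A`: `A` has an accepting run on `M`. -/
def SatA {σ : Set ℕ} (M : Model) (A : NPTA σ) : Prop := ∃ ρ, IsAccRun A M ρ

/-- Joint `≅ⁿ_σ`-consistency of two automata over `T^d`. -/
def JointConA {σ : Set ℕ} (d : ℕ) (A A' : NPTA σ) (n : ℕ) : Prop :=
  ∃ M ∈ TreeC d, ∃ M' ∈ TreeC d, SatA M A ∧ SatA M' A' ∧ NIsoEq M M' σ n

/-! Let `Sₙ` be the set of pairs of states `(q, q')` from which `A` and `A'` are joint
`≅ⁿ_σ`-consistent. Splitting two `(σ,n+1)`-isomorphic trees at their roots, and conversely putting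
pairs of `(σ,n)`-isomorphic trees below two equally labelled fresh roots, shows that `Sₙ₊₁` is
obtained from `Sₙ` by an operator that does not depend on `n`. The sequence `S₀ ⊇ S₁ ⊇ ⋯` lives in
a set with `|A| · |A'|` elements, so it is constant from index `|A| · |A'|` on. -/

open Cardinal Relation

theorem eq_of_antitone_of_succ_eq_of_card_le {α : Type*} [Finite α] {F : Set α → Set α}
    {S : ℕ → Set α} (hS : Antitone S) (hF : ∀ n, S (n + 1) = F (S n)) {n : ℕ}
    (hn : Nat.card α ≤ n) : S n = S (Nat.card α) := by
  have compl_mono {i j : ℕ} (hij : i ≤ j) : (S i)ᶜ ⊆ (S j)ᶜ := Set.compl_subset_compl.2 (hS hij)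
  have eq_of_ncard_compl_eq {i j : ℕ} (hij : i ≤ j) (h : (S j)ᶜ.ncard = (S i)ᶜ.ncard) :
      S j = S i :=
    compl_injective (Set.eq_of_subset_of_ncard_le (compl_mono hij) h.le).symm
  refine eq_of_ncard_compl_eq hn (Nat.stabilises_of_monotone (f := fun i => (S i)ᶜ.ncard)
    (fun i j hij => Set.ncard_le_ncard (compl_mono hij)) (fun i => Set.ncard_le_card _)
    (fun i hi => ?_) hn)
  have succ_eq : S (i + 1) = S i := eq_of_ncard_compl_eq i.le_succ hi.symm
  have succ_succ_eq : S (i + 2) = S (i + 1) := by rw [hF (i + 1), succ_eq, ← hF i, succ_eq]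
  rw [succ_succ_eq]

theorem ParityGood.of_add {r : ℕ → ℕ} (j : ℕ) (h : ParityGood fun i => r (i + j)) :
    ParityGood r := by
  obtain ⟨m, hm, infinitely_often, eventually_not⟩ := h
  refine ⟨m, hm, fun N => ?_, fun k hk => ?_⟩
  · obtain ⟨i, hNi, hi⟩ := infinitely_often N
    exact ⟨i + j, by lia, hi⟩
  · obtain ⟨N, hN⟩ := eventually_not k hk
    refine ⟨N + j, fun i hi => ?_⟩
    rw [← Nat.sub_add_cancel (show j ≤ i by lia)]
    exact hN (i - j) (by lia)

namespace Model

variable {M : Model} {k : ℕ}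

/-- The immediate successors of a point, as a type. -/
abbrev Child (M : Model) (w : M.W) : Type := {v // M.R w v}

theorem outdegLE_iff {d : ℕ} : M.outdegLE d ↔ ∀ w, #(M.Child w) ≤ d := by
  refine forall_congr' fun w => ?_
  have atLeastCard_iff : AtLeastCard (d + 1) {v | M.R w v} ↔ (d + 1 : ℕ) ≤ #(M.Child w) := by
    rw [← mk_fin, Cardinal.le_def]
    exact ⟨fun ⟨f, hf, hR⟩ => ⟨⟨fun i => ⟨f i, hR i⟩, fun i j h => hf (congrArg Subtype.val h)⟩⟩,
      fun ⟨f⟩ => ⟨fun i => f i, Subtype.val_injective.comp f.injective, fun i => (f i).2⟩⟩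
  rw [atLeastCard_iff, Nat.cast_succ, natCast_add_one_le_iff, not_lt]

theorem exists_stepsTo_of_reflTransGen {v w : M.W} (hv : M.stepsTo k v)
    (hvw : ReflTransGen M.R v w) : ∃ j ≥ k, M.stepsTo j w := by
  induction hvw with
  | refl => exact ⟨k, le_rfl, hv⟩
  | tail _ huw ih =>
    obtain ⟨j, hkj, hj⟩ := ih
    exact ⟨j + 1, by lia, _, hj, huw⟩

theorem IsTree.exists_stepsTo (hM : M.IsTree) (w : M.W) : ∃ k, M.stepsTo k w := by
  obtain ⟨k, -, hk⟩ := exists_stepsTo_of_reflTransGen (k := 0) rfl (hM.1 w)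
  exact ⟨k, hk⟩

theorem IsTree.stepsTo_unique (hM : M.IsTree) {j : ℕ} {w : M.W} (hj : M.stepsTo j w)
    (hk : M.stepsTo k w) : j = k := by
  induction j generalizing k w with
  | zero =>
    obtain rfl := hj
    cases k with
    | zero => rfl
    | succ k =>
      obtain ⟨v, -, hv⟩ := hk
      exact absurd hv (hM.2.1 v)
  | succ j ih =>
    obtain ⟨v, hv, hvw⟩ := hj
    cases k with
    | zero =>
      obtain rfl := hk
      exact absurd hvw (hM.2.1 v)
    | succ k =>
      obtain ⟨u, hu, huw⟩ := hk
      obtain rfl := hM.2.2 _ _ _ hvw huw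
      rw [ih hv hu]

/-- The submodel generated by a point `v`, that is, the subtree rooted at `v` if `M` is a tree. -/
abbrev subtree (M : Model) (v : M.W) : Model where
  W := {w // ReflTransGen M.R v w}
  root := ⟨v, .refl⟩
  R a b := M.R a.1 b.1
  val a := M.val a.1

/-- A point of a subtree has the same children there as in the whole model. -/
def childSubtreeEquiv {v : M.W} (a : (M.subtree v).W) :
    (M.subtree v).Child a ≃ M.Child a.1 where
  toFun b := ⟨b.1.1, b.2⟩
  invFun u := ⟨⟨u.1, a.2.tail u.2⟩, u.2⟩

theorem outdegLE.subtree {d : ℕ} (hM : M.outdegLE d) (v : M.W) : (M.subtree v).outdegLE d :=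
  outdegLE_iff.2 fun a => (mk_congr (childSubtreeEquiv a)).trans_le (outdegLE_iff.1 hM a.1)

theorem stepsTo_add_of_subtree {v : M.W} {i : ℕ} (hv : M.stepsTo i v) {a : (M.subtree v).W}
    (ha : (M.subtree v).stepsTo k a) : M.stepsTo (i + k) a.1 := by
  induction k generalizing a with
  | zero =>
    obtain rfl := ha
    exact hv
  | succ k ih =>
    obtain ⟨b, hb, hba⟩ := ha
    exact ⟨b.1, ih hb, hba⟩

theorem subtree_reflTransGen {v : M.W} (a : (M.subtree v).W) :
    ReflTransGen (M.subtree v).R (M.subtree v).root a := by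
  obtain ⟨w, hw⟩ := a
  induction hw with
  | refl => exact .refl
  | tail _ huw ih => exact ih.tail huw

theorem IsTree.subtree (hM : M.IsTree) (v : M.W) : (M.subtree v).IsTree := by
  refine ⟨subtree_reflTransGen, fun a hav => ?_,
    fun a b c hb hc => Subtype.ext (hM.2.2 _ _ _ hb hc)⟩
  obtain ⟨k, hk⟩ := hM.exists_stepsTo v
  obtain ⟨j, hkj, hj⟩ := exists_stepsTo_of_reflTransGen hk a.2
  have depth_v : k = j + 1 := hM.stepsTo_unique hk ⟨a.1, hj, hav⟩
  lia

theorem IsTree.stepsTo_subtree_iff (hM : M.IsTree) {v : M.W} {i : ℕ} (hv : M.stepsTo i v)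
    {a : (M.subtree v).W} : (M.subtree v).stepsTo k a ↔ M.stepsTo (i + k) a.1 := by
  refine ⟨stepsTo_add_of_subtree hv, fun ha => ?_⟩
  obtain ⟨j, hj⟩ := (hM.subtree v).exists_stepsTo a
  obtain rfl : k = j :=
    Nat.add_left_cancel (hM.stepsTo_unique ha (stepsTo_add_of_subtree hv hj))
  exact hj

section Glue

variable {ι : Type} {N : ι → Model} {c : Set ℕ} {i : ι}

/-- The accessibility relation of `glue`. -/
inductive GlueR (N : ι → Model) : Option (Σ i, (N i).W) → Option (Σ i, (N i).W) → Prop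
  | root (i : ι) : GlueR N none (some ⟨i, (N i).root⟩)
  | step {i : ι} {w v : (N i).W} (h : (N i).R w v) : GlueR N (some ⟨i, w⟩) (some ⟨i, v⟩)

/-- The model with a fresh root `none`, labelled `c`, whose immediate subtrees are the `N i`. -/
abbrev glue (c : Set ℕ) (N : ι → Model) : Model where
  W := Option (Σ i, (N i).W)
  root := none
  R := GlueR N
  val w p := w.elim (p ∈ c) fun a => (N a.1).val a.2 p

theorem glueR_some_iff {w v : (N i).W} :
    GlueR N (some ⟨i, w⟩) (some ⟨i, v⟩) ↔ (N i).R w v :=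
  ⟨fun | .step h => h, .step⟩

/-- The children of the root of a glued model correspond to its components. -/
noncomputable def childGlueRootEquiv (c : Set ℕ) (N : ι → Model) : ι ≃ (glue c N).Child none :=
  Equiv.ofBijective (fun i => ⟨some ⟨i, (N i).root⟩, .root i⟩)
    ⟨fun i j h => by cases h; rfl, fun ⟨_, h⟩ => by cases h with | root i => exact ⟨i, rfl⟩⟩

/-- A point of a component of a glued model has the same children there as in the component. -/
noncomputable def childGlueEquiv (c : Set ℕ) (N : ι → Model) (w : (N i).W) :
    (N i).Child w ≃ (glue c N).Child (some ⟨i, w⟩) :=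
  Equiv.ofBijective (fun v => ⟨some ⟨i, v.1⟩, .step v.2⟩)
    ⟨fun u v h => by cases u; cases h; rfl,
      fun ⟨_, h⟩ => by cases h with | step h => exact ⟨⟨_, h⟩, rfl⟩⟩

theorem outdegLE_glue {d : ℕ} (hι : #ι ≤ d) (hN : ∀ i, (N i).outdegLE d) :
    (glue c N).outdegLE d := by
  refine outdegLE_iff.2 ?_
  rintro (_ | ⟨i, w⟩)
  · exact (mk_congr (childGlueRootEquiv c N)).symm.trans_le hι
  · exact (mk_congr (childGlueEquiv c N w)).symm.trans_le (outdegLE_iff.1 (hN i) w)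

theorem stepsTo_glue_iff {w : (N i).W} :
    (glue c N).stepsTo (k + 1) (some ⟨i, w⟩) ↔ (N i).stepsTo k w := by
  induction k generalizing w with
  | zero =>
    constructor
    · rintro ⟨_, rfl, ⟨⟩⟩
      rfl
    · rintro rfl
      exact ⟨none, rfl, .root i⟩
  | succ k ih =>
    constructor
    · rintro ⟨_, hv, hvw⟩
      cases hvw with
      | root =>
        obtain ⟨_, -, ⟨⟩⟩ := hv
      | step hvw => exact ⟨_, ih.1 hv, hvw⟩
    · rintro ⟨v, hv, hvw⟩
      exact ⟨some ⟨i, v⟩, ih.2 hv, .step hvw⟩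

theorem isTree_glue (hN : ∀ i, (N i).IsTree) : (glue c N).IsTree := by
  refine ⟨?_, nofun, ?_⟩
  · rintro (_ | ⟨i, w⟩)
    · exact .refl
    · induction (hN i).1 w with
      | refl => exact .single (.root i)
      | tail _ hvw ih => exact ih.tail (.step hvw)
  · have root_or_step : ∀ {i} {w : (N i).W} {u}, GlueR N u (some ⟨i, w⟩) →
        u = none ∧ w = (N i).root ∨ ∃ v, u = some ⟨i, v⟩ ∧ (N i).R v w
      | _, _, _, .root _ => .inl ⟨rfl, rfl⟩
      | _, _, _, .step h => .inr ⟨_, rfl, h⟩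
    rintro (_ | ⟨i, w⟩) u u' hu hu'
    · cases hu
    · rcases root_or_step hu with ⟨rfl, rfl⟩ | ⟨v, rfl, hv⟩ <;>
        rcases root_or_step hu' with ⟨rfl, hw⟩ | ⟨v', rfl, hv'⟩
      · rfl
      · exact absurd hv' ((hN i).2.1 v')
      · exact absurd (hw ▸ hv) ((hN i).2.1 v)
      · rw [(hN i).2.2 _ _ _ hv hv']

theorem exists_path_of_glue_path {π : ℕ → (glue c N).W}
    (hπ : ∀ k, (glue c N).R (π k) (π (k + 1))) :
    ∃ i, ∃ τ : ℕ → (N i).W, (∀ k, π (k + 1) = some ⟨i, τ k⟩) ∧ ∀ k, (N i).R (τ k) (τ (k + 1)) := by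
  have eq_some_of_glueR : ∀ {u v}, GlueR N u v → ∃ i w, v = some ⟨i, w⟩
    | _, _, .root i => ⟨i, _, rfl⟩
    | _, _, .step _ => ⟨_, _, rfl⟩
  have stays_of_glueR : ∀ {i} {w : (N i).W} {v}, GlueR N (some ⟨i, w⟩) v → ∃ w', v = some ⟨i, w'⟩
    | _, _, _, .step _ => ⟨_, rfl⟩
  obtain ⟨i, w, hw⟩ := eq_some_of_glueR (hπ 0)
  have stays_in_component : ∀ k, ∃ w, π (k + 1) = some ⟨i, w⟩ := by
    intro k
    induction k with
    | zero => exact ⟨w, hw⟩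
    | succ k ih =>
      obtain ⟨w, hw⟩ := ih
      exact stays_of_glueR (hw ▸ hπ (k + 1))
  choose τ hτ using stays_in_component
  refine ⟨i, τ, hτ, fun k => glueR_some_iff.1 ?_⟩
  rw [← hτ, ← hτ]
  exact hπ (k + 1)

end Glue

end Model

open Model

section Runs

variable {α β γ : Type*}

/-- Some enumeration of the (finite) index type of the family `s` without repetitions lists the
values of `s` as a member of `L`. With `L` the transitions available at a point and `s` the states
at its children, this is the local condition on a run. -/
def ListableIn (s : α → β) (L : Set (List β)) : Prop :=
  ∃ k, ∃ e : Fin k ≃ α, List.ofFn (s ∘ e) ∈ L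

theorem listableIn_comp_equiv_iff {s : α → β} {L : Set (List β)} (f : γ ≃ α) :
    ListableIn (s ∘ f) L ↔ ListableIn s L := by
  refine exists_congr fun k => (Equiv.equivCongr (.refl _) f).exists_congr fun e => ?_
  rfl

theorem listableIn_subtype_iff {P : α → Prop} {s : α → β} {L : Set (List β)} :
    ListableIn (fun a : Subtype P => s a) L ↔
      ∃ l : List α, l.Nodup ∧ (∀ a, a ∈ l ↔ P a) ∧ l.map s ∈ L := by
  classical
  constructor
  · rintro ⟨k, e, he⟩
    refine ⟨List.ofFn fun i => (e i).1,
      List.nodup_ofFn.2 (Subtype.val_injective.comp e.injective), fun a => ?_, ?_⟩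
    · rw [List.mem_ofFn]
      exact ⟨fun ⟨i, hi⟩ => hi ▸ (e i).2, fun ha => ⟨e.symm ⟨a, ha⟩, by simp⟩⟩
    · rwa [List.map_ofFn]
  · rintro ⟨l, nodup_l, mem_l, hl⟩
    refine ⟨l.length, (nodup_l.getEquiv l).trans (Equiv.subtypeEquivRight mem_l), ?_⟩
    rwa [← List.ofFn_getElem_eq_map] at hl

variable {σ : Set ℕ} {A : NPTA σ} {M : Model}

theorem isRun_iff {ρ : M.W → A.Q} :
    IsRun A M ρ ↔ ρ M.root = A.qI ∧
      ∀ w, ListableIn (fun v : M.Child w => ρ v) (A.δ (ρ w) (σ ∩ {p | M.val w p})) :=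
  and_congr_right fun _ => forall_congr' fun _ => listableIn_subtype_iff.symm

/-- The automaton `A` started in the state `q`. -/
abbrev NPTA.withInit (A : NPTA σ) (q : A.Q) : NPTA σ := { A with qI := q }

theorem IsAccRun.subtree {ρ : M.W → A.Q} (h : IsAccRun A M ρ) (v : M.W) :
    IsAccRun (A.withInit (ρ v)) (M.subtree v) (fun a => ρ a.1) :=
  ⟨isRun_iff.2 ⟨rfl, fun a =>
      (listableIn_comp_equiv_iff (childSubtreeEquiv a)).2 ((isRun_iff.1 h.1).2 a.1)⟩,
    fun π hπ => h.2 (fun i => (π i).1) hπ⟩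

theorem isAccRun_glue {ι : Type} {N : ι → Model} {c : Set ℕ} {q : A.Q} {s : ι → A.Q}
    (hs : ListableIn s (A.δ q (σ ∩ c))) {ρ : ∀ i, (N i).W → A.Q}
    (hρ : ∀ i, IsAccRun (A.withInit (s i)) (N i) (ρ i)) :
    IsAccRun (A.withInit q) (glue c N) (fun w => w.elim q fun a => ρ a.1 a.2) := by
  refine ⟨isRun_iff.2 ⟨rfl, ?_⟩, fun π hπ => ?_⟩
  · rintro (_ | ⟨i, w⟩)
    · obtain rfl : (fun i => ρ i (N i).root) = s := funext fun i => (hρ i).1.1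
      exact (listableIn_comp_equiv_iff (childGlueRootEquiv c N)).1 hs
    · exact (listableIn_comp_equiv_iff (childGlueEquiv c N w)).1 ((isRun_iff.1 (hρ i).1).2 w)
  · obtain ⟨i, τ, hτ, τ_path⟩ := exists_path_of_glue_path hπ
    refine ParityGood.of_add 1 ?_
    simp only [hτ]
    exact (hρ i).2 τ τ_path

end Runs

section Isomorphisms

variable {M M' : Model} {σ : Set ℕ} {n : ℕ} {Z : M.W → M'.W → Prop}

theorem IsNBisim.symm (h : IsNBisim M M' σ n Z) : IsNBisim M' M σ n (flip Z) where
  root := h.root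
  depthEq _ _ hz :=
    let ⟨k, hk, hw, hw'⟩ := h.depthEq hz
    ⟨k, hk, hw', hw⟩
  base _ _ hz p hp := (h.base hz p hp).symm
  forth _ _ hz := h.back hz
  back _ _ hz := h.forth hz

theorem IsNBisim.exists_of_inPrefix (h : IsNBisim M M' σ n Z) {w : M.W} (hw : M.InPrefix n w) :
    ∃ w', Z w w' := by
  obtain ⟨k, hk, hs⟩ := hw
  induction k generalizing w with
  | zero =>
    obtain rfl := hs
    exact ⟨_, h.root⟩
  | succ k ih =>
    obtain ⟨v, hv, hvw⟩ := hs
    obtain ⟨v', hz⟩ := ih (by lia) hv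
    obtain ⟨w', -, hw'⟩ := h.forth hz k hk hv w hvw
    exact ⟨w', hw'⟩

theorem IsNBisim.isNIso (h : IsNBisim M M' σ n Z)
    (right_unique : ∀ w w₁' w₂', Z w w₁' → Z w w₂' → w₁' = w₂')
    (left_unique : ∀ w₁ w₂ w', Z w₁ w' → Z w₂ w' → w₁ = w₂) : IsNIso M M' σ n Z :=
  ⟨h, right_unique, left_unique, fun _ => h.exists_of_inPrefix,
    fun _ => h.symm.exists_of_inPrefix⟩

theorem IsNBisim.le_and_stepsTo (hM : M.IsTree) (h : IsNBisim M M' σ n Z) {w : M.W} {w' : M'.W}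
    (hz : Z w w') {k : ℕ} (hw : M.stepsTo k w) : k ≤ n ∧ M'.stepsTo k w' := by
  obtain ⟨j, hj, hjw, hjw'⟩ := h.depthEq hz
  obtain rfl := hM.stepsTo_unique hw hjw
  exact ⟨hj, hjw'⟩

theorem NIsoEq.mono (hM : M.IsTree) (hM' : M'.IsTree) {m : ℕ} (hmn : m ≤ n)
    (h : NIsoEq M M' σ n) : NIsoEq M M' σ m := by
  obtain ⟨Z, hZ, right_unique, left_unique, -, -⟩ := h
  refine ⟨fun w w' => Z w w' ∧ ∃ k ≤ m, M.stepsTo k w ∧ M'.stepsTo k w', IsNBisim.isNIso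
    ⟨⟨hZ.root, 0, m.zero_le, rfl, rfl⟩, fun _ _ h => h.2, fun _ _ h => hZ.base h.1, ?_, ?_⟩
    (fun _ _ _ h₁ h₂ => right_unique _ _ _ h₁.1 h₂.1)
    (fun _ _ _ h₁ h₂ => left_unique _ _ _ h₁.1 h₂.1)⟩
  · rintro w w' ⟨hz, -⟩ k hk hw v hv
    have hw' := (hZ.le_and_stepsTo hM hz hw).2
    obtain ⟨v', hv', hvv'⟩ := hZ.forth hz k (hk.trans_le hmn) hw v hv
    exact ⟨v', hv', hvv', k + 1, hk, ⟨w, hw, hv⟩, ⟨w', hw', hv'⟩⟩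
  · rintro w w' ⟨hz, -⟩ k hk hw' v' hv'
    have hw := (hZ.symm.le_and_stepsTo hM' hz hw').2
    obtain ⟨v, hv, hvv'⟩ := hZ.back hz k (hk.trans_le hmn) hw' v' hv'
    exact ⟨v, hv, hvv', k + 1, hk, ⟨w, hw, hv⟩, ⟨w', hw', hv'⟩⟩

theorem IsNIso.exists_child_equiv (h : IsNIso M M' σ n Z) {w : M.W} {w' : M'.W} (hz : Z w w')
    {k : ℕ} (hk : k < n) (hw : M.stepsTo k w) (hw' : M'.stepsTo k w') :
    ∃ f : M.Child w ≃ M'.Child w', ∀ v : M.Child w, Z v (f v) := by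
  obtain ⟨hZ, right_unique, left_unique, -, -⟩ := h
  have hforth (v : M.Child w) : ∃ v' : M'.Child w', Z v v' :=
    let ⟨v', hv', hvv'⟩ := hZ.forth hz k hk hw v v.2
    ⟨⟨v', hv'⟩, hvv'⟩
  have hback (v' : M'.Child w') : ∃ v : M.Child w, Z v v' :=
    let ⟨v, hv, hvv'⟩ := hZ.back hz k hk hw' v' v'.2
    ⟨⟨v, hv⟩, hvv'⟩
  choose f hf using hforth
  choose g hg using hback
  exact ⟨⟨f, g, fun v => Subtype.ext (left_unique _ _ _ (hg (f v)) (hf v)),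
    fun v' => Subtype.ext (right_unique _ _ _ (hf (g v')) (hg v'))⟩, hf⟩

theorem IsNIso.nIsoEq_subtree (hM : M.IsTree) (hM' : M'.IsTree) {i : ℕ}
    (h : IsNIso M M' σ (i + n) Z) {v : M.W} {v' : M'.W} (hz : Z v v') (hv : M.stepsTo i v)
    (hv' : M'.stepsTo i v') : NIsoEq (M.subtree v) (M'.subtree v') σ n := by
  obtain ⟨hZ, right_unique, left_unique, -, -⟩ := h
  refine ⟨fun a b => Z a.1 b.1, IsNBisim.isNIso
    ⟨hz, fun a b hab => ?_, fun _ _ hab => hZ.base hab, ?_, ?_⟩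
    (fun _ _ _ h₁ h₂ => Subtype.ext (right_unique _ _ _ h₁ h₂))
    (fun _ _ _ h₁ h₂ => Subtype.ext (left_unique _ _ _ h₁ h₂))⟩
  · obtain ⟨k, hk⟩ := (hM.subtree v).exists_stepsTo a
    obtain ⟨hkn, hb⟩ := hZ.le_and_stepsTo hM hab ((hM.stepsTo_subtree_iff hv).1 hk)
    exact ⟨k, Nat.le_of_add_le_add_left hkn, hk, (hM'.stepsTo_subtree_iff hv').2 hb⟩
  · intro a b hab k hk ha x hx
    obtain ⟨y, hy, hxy⟩ :=
      hZ.forth hab (i + k) (by lia) ((hM.stepsTo_subtree_iff hv).1 ha) x.1 hx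
    exact ⟨⟨y, b.2.tail hy⟩, hy, hxy⟩
  · intro a b hab k hk hb y hy
    obtain ⟨x, hx, hxy⟩ :=
      hZ.back hab (i + k) (by lia) ((hM'.stepsTo_subtree_iff hv').1 hb) y.1 hy
    exact ⟨⟨x, a.2.tail hx⟩, hx, hxy⟩

theorem NIsoEq.exists_equiv_subtrees (hM : M.IsTree) (hM' : M'.IsTree)
    (h : NIsoEq M M' σ (n + 1)) : ∃ f : M.Child M.root ≃ M'.Child M'.root,
      ∀ v : M.Child M.root, NIsoEq (M.subtree v) (M'.subtree (f v)) σ n := by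
  obtain ⟨Z, hZ⟩ := h
  obtain ⟨f, hf⟩ := hZ.exists_child_equiv hZ.1.root n.succ_pos rfl rfl
  rw [add_comm] at hZ
  exact ⟨f, fun v => hZ.nIsoEq_subtree hM hM' (hf v) ⟨_, rfl, v.2⟩ ⟨_, rfl, (f v).2⟩⟩

theorem NIsoEq.letter_root_eq (h : NIsoEq M M' σ n) :
    σ ∩ {p | M.val M.root p} = σ ∩ {p | M'.val M'.root p} := by
  obtain ⟨Z, hZ⟩ := h
  ext p
  exact and_congr_right (hZ.1.base hZ.1.root p)

end Isomorphisms

section GlueIsomorphisms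

variable {σ : Set ℕ} {n : ℕ} {c : Set ℕ} {ι : Type} {N N' : ι → Model}
  {Z : ∀ i, (N i).W → (N' i).W → Prop}

/-- The relation between glued models that links the roots and extends the relations `Z i` between
the components. -/
inductive GlueRel (Z : ∀ i, (N i).W → (N' i).W → Prop) :
    Option (Σ i, (N i).W) → Option (Σ i, (N' i).W) → Prop
  | root : GlueRel Z none none
  | some {i : ι} {w : (N i).W} {w' : (N' i).W} (h : Z i w w') :
      GlueRel Z (some ⟨i, w⟩) (some ⟨i, w'⟩)

theorem isNBisim_glue (hZ : ∀ i, IsNBisim (N i) (N' i) σ n (Z i)) :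
    IsNBisim (glue c N) (glue c N') σ (n + 1) (GlueRel Z) where
  root := .root
  depthEq
    | _, _, .root => ⟨0, Nat.zero_le _, rfl, rfl⟩
    | _, _, .some h =>
      let ⟨k, hk, hw, hw'⟩ := (hZ _).depthEq h
      ⟨k + 1, Nat.succ_le_succ hk, stepsTo_glue_iff.2 hw, stepsTo_glue_iff.2 hw'⟩
  base
    | _, _, .root => fun _ _ => Iff.rfl
    | _, _, .some h => (hZ _).base h
  forth
    | _, _, .root, _, _, _, _, .root i => ⟨_, .root i, .some (hZ i).root⟩
    | _, _, .some h, k + 1, hk, hw, _, .step hv =>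
      let ⟨_, hv', hvv'⟩ :=
        (hZ _).forth h k (Nat.lt_of_succ_lt_succ hk) (stepsTo_glue_iff.1 hw) _ hv
      ⟨_, .step hv', .some hvv'⟩
  back
    | _, _, .root, _, _, _, _, .root i => ⟨_, .root i, .some (hZ i).root⟩
    | _, _, .some h, k + 1, hk, hw', _, .step hv' =>
      let ⟨_, hv, hvv'⟩ :=
        (hZ _).back h k (Nat.lt_of_succ_lt_succ hk) (stepsTo_glue_iff.1 hw') _ hv'
      ⟨_, .step hv, .some hvv'⟩

theorem nIsoEq_glue (c : Set ℕ) (h : ∀ i, NIsoEq (N i) (N' i) σ n) :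
    NIsoEq (glue c N) (glue c N') σ (n + 1) := by
  choose Z hZ using h
  refine ⟨GlueRel Z, (isNBisim_glue fun i => (hZ i).1).isNIso ?_ ?_⟩
  · rintro _ _ _ (_ | h₁) (_ | h₂)
    · rfl
    · rw [(hZ _).2.1 _ _ _ h₁ h₂]
  · rintro _ _ _ (_ | h₁) (_ | h₂)
    · rfl
    · rw [(hZ _).2.2.1 _ _ _ h₁ h₂]

end GlueIsomorphisms

section JointConsistency

variable {σ : Set ℕ} {d : ℕ} {A A' : NPTA σ} {n : ℕ}

/-- The pairs of states from which `A` and `A'` are joint `≅ⁿ_σ`-consistent over `T^d`. -/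
def jointPairs (d : ℕ) (A A' : NPTA σ) (n : ℕ) : Set (A.Q × A'.Q) :=
  {p | JointConA d (A.withInit p.1) (A'.withInit p.2) n}

/-- The pairs of states with transitions on a common letter to the same number `k ≤ d` of states
that can be matched up in pairs from `S`. The two automata may list the `k` children in different
orders. -/
def jointPred (d : ℕ) (A A' : NPTA σ) (S : Set (A.Q × A'.Q)) : Set (A.Q × A'.Q) :=
  {p | ∃ c : Set ℕ, ∃ k ≤ d, ∃ s : Fin k → A.Q × A'.Q,
    ListableIn (fun i => (s i).1) (A.δ p.1 (σ ∩ c)) ∧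
    ListableIn (fun i => (s i).2) (A'.δ p.2 (σ ∩ c)) ∧ ∀ i, s i ∈ S}

theorem jointPairs_antitone (d : ℕ) (A A' : NPTA σ) : Antitone (jointPairs d A A') := by
  rintro m n hmn p ⟨M, hM, M', hM', hA, hA', h⟩
  exact ⟨M, hM, M', hM', hA, hA', h.mono hM.1 hM'.1 hmn⟩

theorem jointPred_subset_jointPairs_succ :
    jointPred d A A' (jointPairs d A A' n) ⊆ jointPairs d A A' (n + 1) := by
  rintro ⟨q, q'⟩ ⟨c, k, hk, s, hs, hs', hS⟩
  choose N hN N' hN' hA hA' hiso using hS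
  choose ρ hρ using hA
  choose ρ' hρ' using hA'
  have hcard : #(Fin k) ≤ d := by rwa [mk_fin, Nat.cast_le]
  exact ⟨glue c N, ⟨isTree_glue fun i => (hN i).1, outdegLE_glue hcard fun i => (hN i).2⟩,
    glue c N', ⟨isTree_glue fun i => (hN' i).1, outdegLE_glue hcard fun i => (hN' i).2⟩,
    ⟨_, isAccRun_glue hs hρ⟩, ⟨_, isAccRun_glue hs' hρ'⟩, nIsoEq_glue c hiso⟩

theorem jointPairs_succ_subset_jointPred :
    jointPairs d A A' (n + 1) ⊆ jointPred d A A' (jointPairs d A A' n) := by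
  rintro ⟨q, q'⟩ ⟨M, ⟨hM, hd⟩, M', ⟨hM', hd'⟩, ⟨ρ, hρ⟩, ⟨ρ', hρ'⟩, hiso⟩
  obtain ⟨f, hf⟩ := hiso.exists_equiv_subtrees hM hM'
  obtain ⟨root_eq, hstep⟩ := isRun_iff.1 hρ.1
  obtain ⟨root_eq', hstep'⟩ := isRun_iff.1 hρ'.1
  have hroot := hstep M.root
  have hroot' := hstep' M'.root
  rw [root_eq] at hroot
  rw [root_eq', ← hiso.letter_root_eq] at hroot'
  have ⟨k, e, _⟩ := hroot
  have hk : k ≤ d := by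
    have := outdegLE_iff.1 hd M.root
    rwa [← mk_congr e, mk_fin, Nat.cast_le] at this
  exact ⟨{p | M.val M.root p}, k, hk, fun i => (ρ (e i), ρ' (f (e i))),
    (listableIn_comp_equiv_iff e).2 hroot, (listableIn_comp_equiv_iff (e.trans f)).2 hroot',
    fun i => ⟨M.subtree (e i), ⟨hM.subtree _, hd.subtree _⟩,
      M'.subtree (f (e i)), ⟨hM'.subtree _, hd'.subtree _⟩, ⟨_, hρ.subtree _⟩,
      ⟨_, hρ'.subtree _⟩, hf (e i)⟩⟩

theorem jointPairs_succ (d : ℕ) (A A' : NPTA σ) (n : ℕ) :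
    jointPairs d A A' (n + 1) = jointPred d A A' (jointPairs d A A' n) :=
  jointPairs_succ_subset_jointPred.antisymm jointPred_subset_jointPairs_succ

end JointConsistency

instance NPTA.finite_Q {σ : Set ℕ} (A : NPTA σ) : Finite A.Q := @Finite.of_fintype A.Q A.fin

theorem NPTA.natCard_Q {σ : Set ℕ} (A : NPTA σ) : Nat.card A.Q = A.card :=
  @Nat.card_eq_fintype_card A.Q A.fin

theorem stmt_4_general {σ : Set ℕ} (d : ℕ) (A A' : NPTA σ) {m : ℕ} (hm : A.card * A'.card ≤ m) :
    (∀ n : ℕ, JointConA d A A' n) ↔ JointConA d A A' m := by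
  refine ⟨fun h => h m, fun h n => ?_⟩
  have card_le : Nat.card (A.Q × A'.Q) ≤ m := by
    rwa [Nat.card_prod, A.natCard_Q, A'.natCard_Q]
  have stable {j : ℕ} (hj : m ≤ j) :
      jointPairs d A A' j = jointPairs d A A' (Nat.card (A.Q × A'.Q)) :=
    eq_of_antitone_of_succ_eq_of_card_le (jointPairs_antitone d A A') (jointPairs_succ d A A')
      (card_le.trans hj)
  have mem_max : (A.qI, A'.qI) ∈ jointPairs d A A' (max m n) := by
    rw [stable (le_max_left m n), ← stable le_rfl]
    exact h
  exact jointPairs_antitone d A A' (le_max_right m n) mem_max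

/-- joint `≅ⁿ_σ`-consistency over `T^d` for all `n` is equivalent to joint
`≅ᵐ_σ`-consistency for `m = |A| ⬝ |A'| + 1`. -/
theorem stmt_4 (σ : Set ℕ) (hσ : σ.Finite) (d : ℕ) (A A' : NPTA σ)
    (hA : ∀ q c l, l ∈ A.δ q c → l.length ≤ d)
    (hA' : ∀ q c l, l ∈ A'.δ q c → l.length ≤ d) :
    (∀ n : ℕ, JointConA d A A' n) ↔ JointConA d A A' (A.card * A'.card + 1) :=
  stmt_4_general d A A' (Nat.le_succ _)
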